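/- arXiv:2505.00417 — 6 statements merged into one kernel-verified Lean document; each statement's English description precedes it below -/
import Mathlib

section
/- Let a ∈ (0,1), r = √a, and define the surface profile of the Hur–Wheeler zero-gravity exact solution by x(α) := α − 4r·sin α/(1 + 2r·cos α + r²) for α ∈ ℝ. Then the following trichotomy holds: (1) if a < (√2 − 1)² then x'(α) > 0 for every α ∈ ℝ (the profile is a graph, not overhanging); (2) if a = (√2 − 1)² then x'(α) ≥ 0 for every α ∈ ℝ and x'(α₀) = 0 for some α₀ ∈ ℝ (the profile has a vertical tangent but is not overhanging); (3) if a > (√2 − 1)² then x'(α₁) < 0 for some α₁ ∈ ℝ (the profile is overhanging). -/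
/-- The horizontal surface coordinate of the Hur–Wheeler zero-gravity exact solution. -/
noncomputable def hwProfile (a : ℝ) : ℝ → ℝ :=
  fun α => α - 4 * Real.sqrt a * Real.sin α /
    (1 + 2 * Real.sqrt a * Real.cos α + (Real.sqrt a) ^ 2)

theorem one_add_two_mul_cos_add_sq_pos {r : ℝ} (hr0 : 0 ≤ r) (hr1 : r < 1) (α : ℝ) :
    0 < 1 + 2 * r * Real.cos α + r ^ 2 := by
  nlinarith [mul_nonneg hr0 (by linarith [Real.neg_one_le_cos α] : 0 ≤ 1 + Real.cos α),
    pow_pos (sub_pos.2 hr1) 2]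

theorem deriv_hwProfile {a : ℝ} (ha : a < 1) (α : ℝ) :
    deriv (hwProfile a) α =
      ((1 + √a ^ 2) ^ 2 - 8 * √a ^ 2 + 4 * √a ^ 2 * Real.cos α ^ 2) /
        (1 + 2 * √a * Real.cos α + √a ^ 2) ^ 2 := by
  have hD := (one_add_two_mul_cos_add_sq_pos (Real.sqrt_nonneg a)
    ((Real.sqrt_lt' one_pos).2 (by simpa using ha)) α).ne'
  have hnum : HasDerivAt (fun β => 4 * √a * Real.sin β) (4 * √a * Real.cos α) α :=
    (Real.hasDerivAt_sin α).const_mul _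
  have hden : HasDerivAt (fun β => 1 + 2 * √a * Real.cos β + √a ^ 2)
      (2 * √a * -Real.sin α) α :=
    (((Real.hasDerivAt_cos α).const_mul _).const_add _).add_const _
  have h : HasDerivAt (hwProfile a) _ α := (hasDerivAt_id α).sub (hnum.div hden hD)
  rw [h.deriv, eq_div_iff (pow_ne_zero 2 hD), sub_mul, div_mul_cancel₀ _ (pow_ne_zero 2 hD)]
  linear_combination (-8 * √a ^ 2) * Real.sin_sq_add_cos_sq α

theorem one_add_sq_sq_sub_eight_mul_sq (r : ℝ) :
    (1 + r ^ 2) ^ 2 - 8 * r ^ 2 =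
      (√2 - 1 - r) * ((√2 - r + 1) * (1 + r ^ 2 + 2 * √2 * r)) := by
  have h : √2 ^ 2 = (2 : ℝ) := Real.sq_sqrt zero_le_two
  linear_combination (-1 + 3 * r ^ 2 - 2 * √2 * r) * h

theorem stmt_0 (a : ℝ) (ha : a ∈ Set.Ioo (0 : ℝ) 1) :
    (a < (Real.sqrt 2 - 1) ^ 2 → ∀ α : ℝ, 0 < deriv (hwProfile a) α) ∧
    (a = (Real.sqrt 2 - 1) ^ 2 →
      (∀ α : ℝ, 0 ≤ deriv (hwProfile a) α) ∧ ∃ α₀ : ℝ, deriv (hwProfile a) α₀ = 0) ∧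
    ((Real.sqrt 2 - 1) ^ 2 < a → ∃ α₁ : ℝ, deriv (hwProfile a) α₁ < 0) := by
  obtain ⟨ha0, ha1⟩ := ha
  have hr0 : 0 < √a := Real.sqrt_pos.2 ha0
  have hr1 : √a < 1 := (Real.sqrt_lt' one_pos).2 (by simpa using ha1)
  have h2 : 1 < √2 := Real.lt_sqrt_of_sq_lt (by norm_num)
  have hD : ∀ α : ℝ, 0 < (1 + 2 * √a * Real.cos α + √a ^ 2) ^ 2 := fun α =>
    pow_pos (one_add_two_mul_cos_add_sq_pos hr0.le hr1 α) 2
  have hfac : 0 < (√2 - √a + 1) * (1 + √a ^ 2 + 2 * √2 * √a) :=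
    mul_pos (by linarith) (by positivity)
  simp only [deriv_hwProfile ha1, one_add_sq_sq_sub_eight_mul_sq]
  refine ⟨fun h α => div_pos ?_ (hD α), fun h => ?_,
    fun h => ⟨Real.pi / 2, div_neg_of_neg_of_pos ?_ (hD _)⟩⟩
  · have hr : √a < √2 - 1 := (Real.sqrt_lt' (by linarith)).2 h
    have := mul_pos (sub_pos.2 hr) hfac
    positivity
  · have hr : √a = √2 - 1 := by rw [h, Real.sqrt_sq (by linarith)]
    rw [sub_eq_zero.2 hr.symm, zero_mul]
    exact ⟨fun α => by positivity, Real.pi / 2, by simp⟩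
  · have hr : √2 - 1 < √a := Real.lt_sqrt_of_sq_lt h
    simpa using mul_neg_of_neg_of_pos (sub_neg.2 hr) hfac
end

section
/- Define, for (G,a) in a sufficiently small neighborhood of (0,0) in ℝ², Φ(G,a) := (1 + Ω(a)c(G,a))·Ω(a) + G − (1 + Ω(a)c(G,a))², where c(G,a) := (−(Ω(a) + G) + √(G² + 2Ω(a)G + 2B(a)Ω(a)²))/Ω(a)². Then Φ(0,0) = 0, Φ is continuously differentiable near (0,0) with ∂_GΦ(0,0) = 1 and ∂_aΦ(0,0) = −2. Consequently there exist ε > 0 and a continuously differentiable function G̃ : (−ε,ε) → ℝ with G̃(0) = 0, Φ(G̃(a), a) = 0 for all |a| < ε, and G̃'(0) = 2; moreover G̃(a) is the unique small solution G of Φ(G,a) = 0 for each |a| < ε. -/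
/-- Dimensionless vorticity constant. -/
noncomputable def Om (a : ℝ) : ℝ := (1 - a) / (1 - 3 * a)

/-- Dimensionless Bernoulli constant. -/
noncomputable def Bc (a : ℝ) : ℝ := (1 / 2) * ((1 + a) / (1 - 3 * a)) ^ 2

/-- The laminar-flow constant (imaginary part of the constant solution d(G,a)). -/
noncomputable def cLam (G a : ℝ) : ℝ :=
  (-(Om a + G) + Real.sqrt (G ^ 2 + 2 * Om a * G + 2 * Bc a * (Om a) ^ 2)) / (Om a) ^ 2

/-- The kernel (first Fourier mode) condition for the linearization at the laminar solution. -/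
noncomputable def Φ (G a : ℝ) : ℝ :=
  (1 + Om a * cLam G a) * Om a + G - (1 + Om a * cLam G a) ^ 2

open scoped Topology

theorem contDiffAt_Om {a : ℝ} (ha : 1 - 3 * a ≠ 0) {n : WithTop ℕ∞} : ContDiffAt ℝ n Om a := by
  unfold Om
  fun_prop (disch := assumption)

theorem contDiffAt_Bc {a : ℝ} (ha : 1 - 3 * a ≠ 0) {n : WithTop ℕ∞} : ContDiffAt ℝ n Bc a := by
  unfold Bc
  fun_prop (disch := assumption)

theorem contDiffAt_Φ_zero {n : WithTop ℕ∞} :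
    ContDiffAt ℝ n (fun p : ℝ × ℝ => Φ p.1 p.2) (0, 0) := by
  have hOm : ContDiffAt ℝ n (fun p : ℝ × ℝ => Om p.2) (0, 0) :=
    (contDiffAt_Om (by norm_num)).comp (0, 0) contDiffAt_snd
  have hBc : ContDiffAt ℝ n (fun p : ℝ × ℝ => Bc p.2) (0, 0) :=
    (contDiffAt_Bc (by norm_num)).comp (0, 0) contDiffAt_snd
  have hc : ContDiffAt ℝ n (fun p : ℝ × ℝ => cLam p.1 p.2) (0, 0) := by
    unfold cLam
    refine ContDiffAt.div (ContDiffAt.add (by fun_prop) (ContDiffAt.sqrt (by fun_prop) ?_))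
      (by fun_prop) ?_ <;> norm_num [Om, Bc]
  unfold Φ
  fun_prop

theorem Φ_zero_zero : Φ 0 0 = 0 := by
  norm_num [Φ, cLam, Om, Bc]

theorem hasDerivAt_Φ_left_zero : HasDerivAt (fun G => Φ G 0) 1 0 := by
  have hs : HasDerivAt (fun G : ℝ => √(G ^ 2 + 2 * G + 1)) 1 0 := by
    have h : HasDerivAt (fun G : ℝ => G ^ 2 + 2 * G + 1) 2 0 := by
      simpa using (((hasDerivAt_id (0 : ℝ)).pow 2).add
        ((hasDerivAt_id (0 : ℝ)).const_mul 2)).add_const 1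
    simpa using h.sqrt (by norm_num)
  have hΦ : (fun G => Φ G 0)
      = fun G : ℝ => √(G ^ 2 + 2 * G + 1) - (√(G ^ 2 + 2 * G + 1) - G) ^ 2 := by
    funext G
    simp [Φ, cLam, Om, Bc]
    ring
  rw [hΦ]
  exact (hs.sub ((hs.sub (hasDerivAt_id (0 : ℝ))).pow 2)).congr_deriv (by simp)

theorem hasDerivAt_Om_zero : HasDerivAt Om 2 0 := by
  have h := ((hasDerivAt_id (0 : ℝ)).const_sub 1).div
    (((hasDerivAt_id (0 : ℝ)).const_mul 3).const_sub 1) (by norm_num)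
  exact h.congr_deriv (by norm_num)

theorem hasDerivAt_Φ_right_zero : HasDerivAt (fun a => Φ 0 a) (-2) 0 := by
  have hu : HasDerivAt (fun a : ℝ => (1 + a) / (1 - 3 * a)) 4 0 := by
    have h := ((hasDerivAt_id (0 : ℝ)).const_add 1).div
      (((hasDerivAt_id (0 : ℝ)).const_mul 3).const_sub 1) (by norm_num)
    exact h.congr_deriv (by norm_num)
  have h : HasDerivAt (fun a : ℝ => (1 + a) / (1 - 3 * a) * Om a - ((1 + a) / (1 - 3 * a)) ^ 2)
      (-2) 0 :=
    ((hu.mul hasDerivAt_Om_zero).sub (hu.pow 2)).congr_deriv (by norm_num [Om])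
  refine h.congr_of_eventuallyEq ?_
  filter_upwards [Ioo_mem_nhds (show (-1 / 3 : ℝ) < 0 by norm_num)
    (show (0 : ℝ) < 1 / 3 by norm_num)] with a ha
  have hd : 0 < 1 - 3 * a := by linarith [ha.2]
  have hu0 : 0 < (1 + a) / (1 - 3 * a) := div_pos (by linarith [ha.1]) hd
  have hO : 0 < Om a := div_pos (by linarith [ha.2]) hd
  have hsqrt : √((0 : ℝ) ^ 2 + 2 * Om a * 0 + 2 * Bc a * Om a ^ 2)
      = (1 + a) / (1 - 3 * a) * Om a := by
    rw [← Real.sqrt_sq (mul_pos hu0 hO).le]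
    congr 1
    unfold Bc
    ring
  unfold Φ cLam
  rw [hsqrt]
  generalize (1 + a) / (1 - 3 * a) = u
  field_simp
  ring

/-- The implicit function theorem for a scalar equation `f G a = 0` in the plane, solved for the
first variable near the origin. -/
theorem exists_implicit_solution {f : ℝ → ℝ → ℝ} {fG fa : ℝ}
    (hf : ContDiffAt ℝ 1 (fun p : ℝ × ℝ => f p.1 p.2) (0, 0)) (h0 : f 0 0 = 0)
    (hG : HasDerivAt (fun G => f G 0) fG 0) (ha : HasDerivAt (fun a => f 0 a) fa 0)
    (hne : fG ≠ 0) :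
    ∃ ε > (0 : ℝ), ∃ g : ℝ → ℝ, ContDiffOn ℝ 1 g (Set.Ioo (-ε) ε) ∧ g 0 = 0 ∧
      (∀ a : ℝ, |a| < ε → f (g a) a = 0) ∧ HasDerivAt g (-fa / fG) 0 ∧
      ∃ δ > (0 : ℝ), ∀ a : ℝ, |a| < ε → ∀ G : ℝ, |G| < δ → (f G a = 0 ↔ G = g a) := by
  have hF : ContDiffAt ℝ 1 (fun q : ℝ × ℝ => f q.2 q.1) (0, 0) :=
    ContDiffAt.comp (g := fun p : ℝ × ℝ => f p.1 p.2) (f := Prod.swap) (0, 0) hf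
      (contDiffAt_snd.prodMk contDiffAt_fst)
  set L := fderiv ℝ (fun q : ℝ × ℝ => f q.2 q.1) (0, 0) with hL
  have hF' : HasFDerivAt (fun q : ℝ × ℝ => f q.2 q.1) L (0, 0) :=
    (hF.differentiableAt one_ne_zero).hasFDerivAt
  have hLG : L (0, 1) = fG :=
    (hF'.comp_hasDerivAt (f := fun G : ℝ => ((0 : ℝ), G)) 0
      ((hasDerivAt_const 0 0).prodMk (hasDerivAt_id 0))).unique hG
  have hLa : L (1, 0) = fa :=
    (hF'.comp_hasDerivAt (f := fun a : ℝ => (a, (0 : ℝ))) 0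
      ((hasDerivAt_id 0).prodMk (hasDerivAt_const 0 0))).unique ha
  have hLinr : L ∘L .inr ℝ ℝ ℝ
      = (ContinuousLinearEquiv.unitsEquivAut ℝ (Units.mk0 fG hne) : ℝ →L[ℝ] ℝ) := by
    ext
    simp [hLG]
  have hinv : (L ∘L .inr ℝ ℝ ℝ).IsInvertible := ⟨_, hLinr.symm⟩
  set g := hF.implicitFunction one_ne_zero hinv
  have hg0 : g 0 = 0 := hF.implicitFunction_apply_self one_ne_zero hinv
  have hder : HasDerivAt g (-fa / fG) 0 := by
    have h := (hF.hasStrictFDerivAt_implicitFunction one_ne_zero hinv).hasFDerivAt.hasDerivAt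
    refine h.congr_deriv ?_
    rw [← hL, hLinr, ContinuousLinearMap.inverse_equiv]
    simp [hLa, div_eq_mul_inv]
  have hsol : ∀ᶠ a in 𝓝 (0 : ℝ), f (g a) a = 0 := by
    simpa [h0] using hF.eventually_apply_implicitFunction one_ne_zero hinv
  have hC : ∀ᶠ a in 𝓝 (0 : ℝ), ContDiffAt ℝ 1 g a :=
    (hF.contDiffAt_implicitFunction one_ne_zero hinv).eventually (by simp)
  have huniq : ∀ᶠ q in 𝓝 ((0 : ℝ), (0 : ℝ)), f q.2 q.1 = 0 ↔ g q.1 = q.2 := by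
    simpa [h0] using hF.eventually_apply_eq_iff_implicitFunction one_ne_zero hinv
  obtain ⟨ε, hε, hsolC⟩ := Metric.eventually_nhds_iff.1 (hsol.and hC)
  obtain ⟨δ, hδ, hδuniq⟩ := Metric.eventually_nhds_iff.1 huniq
  refine ⟨min ε δ, lt_min hε hδ, g, fun a ha => ?_, hg0, fun a ha => ?_, hder, δ, hδ,
    fun a ha G hG => ?_⟩
  · refine (hsolC ?_).2.contDiffWithinAt
    simpa using (abs_lt.2 ha).trans_le (min_le_left _ _)
  · refine (hsolC ?_).1
    simpa using ha.trans_le (min_le_left _ _)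
  · rw [eq_comm (a := G)]
    refine hδuniq (y := (a, G)) ?_
    simpa [Prod.dist_eq] using ⟨ha.trans_le (min_le_right _ _), hG⟩

theorem stmt_5 :
    Φ 0 0 = 0 ∧
    (∃ ε₀ > (0 : ℝ),
        ContDiffOn ℝ 1 (fun p : ℝ × ℝ => Φ p.1 p.2) (Metric.ball ((0 : ℝ), (0 : ℝ)) ε₀)) ∧
    deriv (fun G => Φ G 0) 0 = 1 ∧
    deriv (fun a => Φ 0 a) 0 = -2 ∧
    ∃ ε > (0 : ℝ), ∃ Gt : ℝ → ℝ,
      ContDiffOn ℝ 1 Gt (Set.Ioo (-ε) ε) ∧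
      Gt 0 = 0 ∧
      (∀ a : ℝ, |a| < ε → Φ (Gt a) a = 0) ∧
      deriv Gt 0 = 2 ∧
      ∃ δ > (0 : ℝ), ∀ a : ℝ, |a| < ε → ∀ G : ℝ, |G| < δ → (Φ G a = 0 ↔ G = Gt a) := by
  refine ⟨Φ_zero_zero, ?_, hasDerivAt_Φ_left_zero.deriv, hasDerivAt_Φ_right_zero.deriv, ?_⟩
  · obtain ⟨ε₀, hε₀, h⟩ := Metric.eventually_nhds_iff_ball.1
      (contDiffAt_Φ_zero (n := 1) |>.eventually (by simp))
    exact ⟨ε₀, hε₀, fun p hp => (h p hp).contDiffWithinAt⟩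
  · obtain ⟨ε, hε, g, hg, hg0, hsol, hder, huniq⟩ := exists_implicit_solution contDiffAt_Φ_zero
      Φ_zero_zero hasDerivAt_Φ_left_zero hasDerivAt_Φ_right_zero one_ne_zero
    exact ⟨ε, hε, g, hg, hg0, hsol, by simpa using hder.deriv, huniq⟩
end

section
/- Let U ⊆ ℂ be an open set containing (α₀, 0), let z = x + iy : U → ℂ be holomorphic, ψ : U → ℝ of class C², and G, B real constants. Assume: (a) ψ(α,0) = 0 for all α with (α,0) ∈ U; (b) ψ_β(α,0) = √(2(B − G·y(α,0))·(x_α(α,0)² + y_α(α,0)²)) for all α with (α,0) ∈ U; (c) x_α(α₀,0) = 0; (d) y_α(α₀,0) > 0; (e) B − G·y(α₀,0) > 0. Define F := ψ_α y_α + ψ_β x_α. Then ∂_β F(α₀, 0) = −G·y_α(α₀,0)³ / √(2(B − G·y(α₀,0))). -/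
/-- The numerator `ψ_α y_α + ψ_β x_α` of the horizontal fluid velocity, in conformal
coordinates, where `ℂ` is identified with `ℝ²` via `ζ = α + iβ`, `x = Re z`, `y = Im z`. -/
noncomputable def FnumC (z : ℂ → ℂ) (ψ : ℂ → ℝ) : ℂ → ℝ := fun ζ =>
  fderiv ℝ ψ ζ 1 * fderiv ℝ (fun w => (z w).im) ζ 1
    + fderiv ℝ ψ ζ Complex.I * fderiv ℝ (fun w => (z w).re) ζ 1

theorem fderiv_re_one {z : ℂ → ℂ} {ζ : ℂ} (h : DifferentiableAt ℂ z ζ) :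
    fderiv ℝ (fun w => (z w).re) ζ 1 = (deriv z ζ).re := by
  have h1 := (Complex.reCLM.hasFDerivAt (x := z ζ)).comp ζ
    (h.hasDerivAt.hasFDerivAt.restrictScalars ℝ)
  rw [show (fun w => (z w).re) = Complex.reCLM ∘ z from rfl, h1.fderiv]
  simp

theorem fderiv_im_one {z : ℂ → ℂ} {ζ : ℂ} (h : DifferentiableAt ℂ z ζ) :
    fderiv ℝ (fun w => (z w).im) ζ 1 = (deriv z ζ).im := by
  have h1 := (Complex.imCLM.hasFDerivAt (x := z ζ)).comp ζ
    (h.hasDerivAt.hasFDerivAt.restrictScalars ℝ)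
  rw [show (fun w => (z w).im) = Complex.imCLM ∘ z from rfl, h1.fderiv]
  simp

/-- The composition of a real-differentiable map on `ℂ` with an affine real line. -/
theorem HasFDerivAt.hasDerivAt_line {E : Type*} [NormedAddCommGroup E] [NormedSpace ℝ E]
    {f : ℂ → E} {L : ℂ →L[ℝ] E} {p : ℂ} (h : HasFDerivAt f L p) (v : ℂ) :
    HasDerivAt (fun t : ℝ => f (p + t • v)) (L v) 0 := by
  exact h.hasLineDerivAt v

theorem stmt_10 (U : Set ℂ) (hU : IsOpen U) (α₀ : ℝ) (hα₀ : (α₀ : ℂ) ∈ U)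
    (z : ℂ → ℂ) (hz : DifferentiableOn ℂ z U)
    (ψ : ℂ → ℝ) (hψ : ContDiffOn ℝ 2 ψ U) (G B : ℝ)
    (ha : ∀ α : ℝ, (α : ℂ) ∈ U → ψ (α : ℂ) = 0)
    (hb : ∀ α : ℝ, (α : ℂ) ∈ U →
      fderiv ℝ ψ (α : ℂ) Complex.I
        = Real.sqrt (2 * (B - G * (z (α : ℂ)).im) *
            ((fderiv ℝ (fun w => (z w).re) (α : ℂ) 1) ^ 2
              + (fderiv ℝ (fun w => (z w).im) (α : ℂ) 1) ^ 2)))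
    (hc : fderiv ℝ (fun w => (z w).re) (α₀ : ℂ) 1 = 0)
    (hd : 0 < fderiv ℝ (fun w => (z w).im) (α₀ : ℂ) 1)
    (he : 0 < B - G * (z (α₀ : ℂ)).im) :
    fderiv ℝ (FnumC z ψ) (α₀ : ℂ) Complex.I
      = -G * (fderiv ℝ (fun w => (z w).im) (α₀ : ℂ) 1) ^ 3
          / Real.sqrt (2 * (B - G * (z (α₀ : ℂ)).im)) := by
  set p : ℂ := (α₀ : ℂ) with hp
  have hUp : ∀ᶠ ζ in nhds p, ζ ∈ U := hU.mem_nhds hα₀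
  have hzU : ∀ ζ ∈ U, DifferentiableAt ℂ z ζ := fun ζ hζ =>
    (hz ζ hζ).differentiableAt (hU.mem_nhds hζ)
  have hψp : ContDiffAt ℝ 2 ψ p := hψ.contDiffAt (hU.mem_nhds hα₀)
  have hD : HasFDerivAt (fderiv ℝ ψ) (fderiv ℝ (fderiv ℝ ψ) p) p :=
    ((hψp.fderiv_right (m := 1) (by norm_num)).differentiableAt (by norm_num)).hasFDerivAt
  have hsymm : fderiv ℝ (fderiv ℝ ψ) p Complex.I 1 = fderiv ℝ (fderiv ℝ ψ) p 1 Complex.I :=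
    hψp.isSymmSndFDerivAt (by simp) Complex.I 1
  have hz' : HasDerivAt (deriv z) (deriv (deriv z) p) p :=
    ((hz.deriv hU).differentiableAt (hU.mem_nhds hα₀)).hasDerivAt
  have hz1 := (hzU p hα₀).hasDerivAt
  rw [fderiv_re_one (hzU p hα₀)] at hc
  rw [fderiv_im_one (hzU p hα₀)] at hd ⊢
  have hline : ∀ v : ℂ, Filter.Tendsto (fun t : ℝ => p + t • v) (nhds 0) (nhds p) := fun v =>
    Continuous.tendsto' (by fun_prop) _ _ (by simp)
  have hreal : ∀ t : ℝ, p + t • (1 : ℂ) = ((α₀ + t : ℝ) : ℂ) := fun t => by simp [hp]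
  -- on the free surface `ψ_α` vanishes
  have hψα : fderiv ℝ ψ p 1 = 0 := by
    have h1 := (hψp.differentiableAt (by norm_num)).hasFDerivAt.hasDerivAt_line 1
    refine h1.unique ((hasDerivAt_const (0 : ℝ) (0 : ℝ)).congr_of_eventuallyEq ?_)
    filter_upwards [(hline 1).eventually hUp] with t ht
    rw [hreal] at ht ⊢
    exact ha _ ht
  have hψβ := hb α₀ hα₀
  rw [← hp, fderiv_re_one (hzU p hα₀), fderiv_im_one (hzU p hα₀), hc] at hψβ
  have hzero : ∀ v : ℂ, p + (0 : ℝ) • v = p := fun v => by simp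
  have hre : ∀ v : ℂ, HasDerivAt (fun t : ℝ => (deriv z (p + t • v)).re)
      (v * deriv (deriv z) p).re 0 := fun v => by
    simpa using ((Complex.reCLM.hasFDerivAt (x := deriv z p)).comp p
      (hz'.hasFDerivAt.restrictScalars ℝ)).hasDerivAt_line v
  have him : ∀ v : ℂ, HasDerivAt (fun t : ℝ => (deriv z (p + t • v)).im)
      (v * deriv (deriv z) p).im 0 := fun v => by
    simpa using ((Complex.imCLM.hasFDerivAt (x := deriv z p)).comp p
      (hz'.hasFDerivAt.restrictScalars ℝ)).hasDerivAt_line v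
  have hy : HasDerivAt (fun t : ℝ => (z (p + t • (1 : ℂ))).im) (deriv z p).im 0 := by
    simpa using ((Complex.imCLM.hasFDerivAt (x := z p)).comp p
      (hz1.hasFDerivAt.restrictScalars ℝ)).hasDerivAt_line 1
  have hDv : ∀ u v : ℂ, HasDerivAt (fun t : ℝ => fderiv ℝ ψ (p + t • v) u)
      (fderiv ℝ (fderiv ℝ ψ) p v u) 0 := fun u v => by
    simpa using (hD.hasDerivAt_line v).clm_apply (hasDerivAt_const (0 : ℝ) u)
  have hs : 0 < Real.sqrt (2 * (B - G * (z p).im)) := Real.sqrt_pos.2 (by linarith)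
  have hs2 : Real.sqrt (2 * (B - G * (z p).im)) ^ 2 = 2 * (B - G * (z p).im) :=
    Real.sq_sqrt (by linarith)
  have hroot : Real.sqrt (2 * (B - G * (z p).im) * ((0 : ℝ) ^ 2 + (deriv z p).im ^ 2))
      = Real.sqrt (2 * (B - G * (z p).im)) * (deriv z p).im := by
    rw [Real.sqrt_mul (by linarith), zero_pow two_ne_zero, zero_add, Real.sqrt_sq hd.le]
  -- differentiate the Bernoulli condition along the free surface
  have hψαβ : fderiv ℝ (fderiv ℝ ψ) p 1 Complex.I
      = -G * (deriv z p).im ^ 2 / Real.sqrt (2 * (B - G * (z p).im))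
        + Real.sqrt (2 * (B - G * (z p).im)) * (deriv (deriv z) p).im := by
    have h1 := (((hy.const_mul G).const_sub B).const_mul 2).mul
      (((hre 1).pow 2).add ((him 1).pow 2))
    have h2 := h1.sqrt (by
      simp only [Pi.mul_apply, Pi.add_apply, Pi.pow_apply, hzero, hc]
      positivity)
    have h3 := (hDv Complex.I 1).unique (h2.congr_of_eventuallyEq (by
      filter_upwards [(hline 1).eventually hUp] with t ht
      have h4 := fderiv_re_one (hzU _ ht)
      have h5 := fderiv_im_one (hzU _ ht)
      simp only [Pi.mul_apply, Pi.add_apply, Pi.pow_apply]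
      rw [← h4, ← h5]
      rw [hreal] at ht ⊢
      exact hb _ ht))
    rw [h3]
    simp only [Pi.mul_apply, Pi.add_apply, Pi.pow_apply, hzero, hc, hroot, one_mul]
    field_simp
    rw [hs2]
    norm_num
    ring
  have hF : HasDerivAt (fun t : ℝ => FnumC z ψ (p + t • Complex.I)) _ 0 :=
    (((hDv 1 Complex.I).mul (him Complex.I)).add
      ((hDv Complex.I Complex.I).mul (hre Complex.I))).congr_of_eventuallyEq (by
      filter_upwards [(hline Complex.I).eventually hUp] with t ht
      simp only [Pi.mul_apply, Pi.add_apply, FnumC, fderiv_re_one (hzU _ ht),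
        fderiv_im_one (hzU _ ht)])
  have hFd : DifferentiableAt ℝ (FnumC z ψ) p := by
    have hz'd : DifferentiableAt ℝ (deriv z) p := hz'.differentiableAt.restrictScalars ℝ
    have hDd := hD.differentiableAt
    have h1 : DifferentiableAt ℝ (fun ζ => fderiv ℝ ψ ζ 1 * (deriv z ζ).im
        + fderiv ℝ ψ ζ Complex.I * (deriv z ζ).re) p :=
      ((hDd.clm_apply (differentiableAt_const _)).mul
        (Complex.imCLM.differentiableAt.comp p hz'd)).add
      ((hDd.clm_apply (differentiableAt_const _)).mul
        (Complex.reCLM.differentiableAt.comp p hz'd))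
    refine h1.congr_of_eventuallyEq ?_
    filter_upwards [hUp] with ζ hζ
    simp only [FnumC, fderiv_re_one (hzU _ hζ), fderiv_im_one (hzU _ hζ)]
  rw [(hFd.hasFDerivAt.hasDerivAt_line Complex.I).unique hF]
  simp only [hzero, hc, hψα, hsymm, hψαβ, hψβ, hroot, Complex.I_mul_re]
  field_simp
  ring
end

section
/- Let k ≥ 2 be an integer, p = (α₀, β₀) ∈ ℝ², and let F : ℝ² → ℝ be of class C^k on a neighborhood of p. Assume F(p) = 0, ∂_β F(p) ≠ 0, ∂_α^j F(p) = 0 for all 1 ≤ j ≤ k − 2, and ∂_α^{k−1} F(p) ≠ 0. Then there exist ε > 0 and a C^k function h : (α₀ − ε, α₀ + ε) → ℝ with h(α₀) = β₀ such that for all (α, β) with |α − α₀| < ε and |β − β₀| < ε one has F(α, β) = 0 if and only if β = h(α); moreover (h(α) − β₀)/(α − α₀)^{k−1} → −∂_α^{k−1}F(p) / ((k−1)!·∂_β F(p)) as α → α₀. -/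
open Filter Topology Asymptotics

/-- If all derivatives of `f` of order less than `n` vanish at `x₀`, then `f x / (x - x₀) ^ n`
tends to the `n`-th Taylor coefficient of `f` at `x₀`. -/
theorem ContDiffAt.tendsto_div_pow_of_iteratedDeriv_eq_zero {f : ℝ → ℝ} {x₀ : ℝ} {n : ℕ}
    (hf : ContDiffAt ℝ n f x₀) (hzero : ∀ j < n, iteratedDeriv j f x₀ = 0) :
    Tendsto (fun x => f x / (x - x₀) ^ n) (𝓝[≠] x₀)
      (𝓝 (iteratedDeriv n f x₀ / (n.factorial : ℝ))) := by
  obtain ⟨r, hr, hball⟩ := Metric.eventually_nhds_iff_ball.mp (hf.eventually (by simp))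
  have hmem : x₀ ∈ Metric.ball x₀ r := Metric.mem_ball_self hr
  have htaylor := Real.taylor_tendsto (convex_ball x₀ r) hmem
    (fun x hx => (hball x hx).contDiffWithinAt)
  rw [nhdsWithin_eq_nhds.mpr (Metric.ball_mem_nhds x₀ hr)] at htaylor
  have heval : ∀ x, taylorWithinEval f n (Metric.ball x₀ r) x₀ x =
      (n.factorial : ℝ)⁻¹ * (x - x₀) ^ n * iteratedDeriv n f x₀ := by
    intro x
    rw [taylor_within_apply, Finset.sum_range_succ, Finset.sum_eq_zero, zero_add,
      iteratedDerivWithin_of_isOpen Metric.isOpen_ball hmem, smul_eq_mul]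
    intro j hj
    rw [iteratedDerivWithin_of_isOpen Metric.isOpen_ball hmem,
      hzero j (Finset.mem_range.mp hj), smul_zero]
  have hlim := (htaylor.mono_left (nhdsWithin_le_nhds (s := {x₀}ᶜ))).add_const
    (iteratedDeriv n f x₀ / (n.factorial : ℝ))
  rw [zero_add] at hlim
  refine hlim.congr' ?_
  filter_upwards [self_mem_nhdsWithin] with x hx
  have hpow : (x - x₀) ^ n ≠ 0 := pow_ne_zero _ (sub_ne_zero.mpr hx)
  rw [heval]
  field_simp
  ring

/-- If the graph of `h` lies in the zero set of `F` near `a` and `∂₂F (a, b) ≠ 0`, then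
`∂₂F (a, b) * (h x - b)` is equivalent to `-F (x, b)` as `x → a`. -/
theorem HasStrictFDerivAt.isEquivalent_of_eventually_eq_zero {F : ℝ × ℝ → ℝ} {a b : ℝ}
    {F' : ℝ × ℝ →L[ℝ] ℝ} (hF : HasStrictFDerivAt F F' (a, b)) (hF' : F' (0, 1) ≠ 0)
    {h : ℝ → ℝ} (hh : Tendsto h (𝓝 a) (𝓝 b)) (hzero : ∀ᶠ x in 𝓝 a, F (x, h x) = 0) :
    (fun x => -F (x, b)) ~[𝓝 a] fun x => F' (0, 1) * (h x - b) := by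
  have htend : Tendsto (fun x => ((x, h x), (x, b))) (𝓝 a) (𝓝 ((a, b), (a, b))) :=
    (tendsto_id.prodMk_nhds hh).prodMk_nhds (tendsto_id.prodMk_nhds tendsto_const_nhds)
  have hlin : ∀ x, F' ((x, h x) - (x, b)) = F' (0, 1) * (h x - b) := by
    intro x
    rw [show ((x, h x) - (x, b) : ℝ × ℝ) = (h x - b) • (0, 1) by simp, map_smul, smul_eq_mul,
      mul_comm]
  have hlittle := hF.isLittleO.comp_tendsto htend
  have hbig : (fun x => ((x, h x) - (x, b) : ℝ × ℝ)) =O[𝓝 a]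
      fun x => F' (0, 1) * (h x - b) := by
    refine (IsBigO.of_bound 1 (Eventually.of_forall fun x => ?_)).trans
      (isBigO_self_const_mul hF' (fun x => h x - b) (𝓝 a))
    simp [Prod.norm_def]
  refine (hlittle.trans_isBigO hbig).congr' ?_ EventuallyEq.rfl
  filter_upwards [hzero] with x hx
  simp only [Function.comp_apply, Pi.sub_apply, hlin, hx, zero_sub]

theorem stmt_11 (k : ℕ) (hk : 2 ≤ k) (α₀ β₀ : ℝ) (F : ℝ × ℝ → ℝ)
    (hF : ContDiffAt ℝ k F (α₀, β₀))
    (h0 : F (α₀, β₀) = 0)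
    (hβ : fderiv ℝ F (α₀, β₀) (0, 1) ≠ 0)
    (hj : ∀ j : ℕ, 1 ≤ j → j ≤ k - 2 → iteratedDeriv j (fun α => F (α, β₀)) α₀ = 0)
    (hk1 : iteratedDeriv (k - 1) (fun α => F (α, β₀)) α₀ ≠ 0) :
    ∃ ε > (0 : ℝ), ∃ h : ℝ → ℝ,
      ContDiffOn ℝ k h (Set.Ioo (α₀ - ε) (α₀ + ε)) ∧
      h α₀ = β₀ ∧
      (∀ α β : ℝ, |α - α₀| < ε → |β - β₀| < ε → (F (α, β) = 0 ↔ β = h α)) ∧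
      Filter.Tendsto (fun α => (h α - β₀) / (α - α₀) ^ (k - 1)) (nhdsWithin α₀ {α₀}ᶜ)
        (nhds (-(iteratedDeriv (k - 1) (fun α => F (α, β₀)) α₀)
          / (((k - 1).factorial : ℝ) * fderiv ℝ F (α₀, β₀) (0, 1)))) := by
  have hk0 : (k : WithTop ℕ∞) ≠ 0 := by
    exact_mod_cast (by omega : k ≠ 0)
  have hinv : (fderiv ℝ F (α₀, β₀) ∘L .inr ℝ ℝ ℝ).IsInvertible := by
    refine ⟨ContinuousLinearEquiv.unitsEquivAut ℝ (Units.mk0 _ hβ), ?_⟩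
    ext
    simp
  set h := hF.implicitFunction hk0 hinv
  have hself : h α₀ = β₀ := hF.implicitFunction_apply_self hk0 hinv
  have hsmooth : ContDiffAt ℝ k h α₀ := hF.contDiffAt_implicitFunction hk0 hinv
  have hzero : ∀ᶠ α in 𝓝 α₀, F (α, h α) = 0 := by
    simpa only [h0] using hF.eventually_apply_implicitFunction hk0 hinv
  have hiff : ∀ᶠ v in 𝓝 (α₀, β₀), F v = 0 ↔ h v.1 = v.2 := by
    simpa only [h0] using hF.eventually_apply_eq_iff_implicitFunction hk0 hinv
  obtain ⟨r, hr, hr_smooth⟩ :=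
    Metric.eventually_nhds_iff_ball.mp (hsmooth.eventually (by simp))
  obtain ⟨s, hs, hs_iff⟩ := Metric.eventually_nhds_iff_ball.mp hiff
  refine ⟨min r s, lt_min hr hs, h, ?_, hself, ?_, ?_⟩
  · intro α hα
    rw [← Real.ball_eq_Ioo] at hα
    exact (hr_smooth α (Metric.ball_subset_ball (min_le_left r s) hα)).contDiffWithinAt
  · intro α β hα hβ'
    rw [hs_iff (α, β), eq_comm]
    rw [Metric.mem_ball, Prod.dist_eq, max_lt_iff]
    exact ⟨hα.trans_le (min_le_right r s), hβ'.trans_le (min_le_right r s)⟩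
  · have hslice : ContDiffAt ℝ (k - 1 : ℕ) (fun α => F (α, β₀)) α₀ := by
      refine ContDiffAt.of_le (ContDiffAt.comp α₀ hF (contDiffAt_id.prodMk contDiffAt_const)) ?_
      exact_mod_cast Nat.sub_le k 1
    have htaylor := hslice.tendsto_div_pow_of_iteratedDeriv_eq_zero (fun j hjk => by
      rcases Nat.eq_zero_or_pos j with rfl | hpos
      · simpa using h0
      · exact hj j hpos (by omega))
    have hcont : Tendsto h (𝓝 α₀) (𝓝 β₀) := by
      simpa only [hself] using hsmooth.continuousAt.tendsto
    have hequiv := (((hF.hasStrictFDerivAt hk0).isEquivalent_of_eventually_eq_zero hβ hcont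
      hzero).mono (nhdsWithin_le_nhds (s := {α₀}ᶜ))).div
        (IsEquivalent.refl (u := fun α => (α - α₀) ^ (k - 1)))
    have hlim := hequiv.tendsto_nhds (htaylor.neg.congr fun α => (neg_div _ _).symm)
    convert hlim.div_const (fderiv ℝ F (α₀, β₀) (0, 1)) using 2
    · simp only [Pi.div_apply]
      field_simp
    · rw [← neg_div, div_div]
end

section
/- Let U ⊆ ℂ be an open set containing (α₀, 0), let z = x + iy : U → ℂ be holomorphic, ψ : U → ℝ smooth (C^∞), and G, B real constants with G ≠ 0. Assume: (a) ψ(α,0) = 0 for all α with (α,0) ∈ U; (b) ψ_β(α,0) = √(2(B − G·y(α,0))·(x_α(α,0)² + y_α(α,0)²)) for all α with (α,0) ∈ U; (c) x_α(α₀,0) = 0; (d) y_α(α₀,0) > 0; (e) B − G·y(α₀,0) > 0. Let k ≥ 2 be the least integer with ∂_α^k x(α₀,0) ≠ 0, and assume k is odd and ∂_α^k x(α₀,0) > 0 (so α ↦ x(α,0) has no local extremum at α₀). Define F := ψ_α y_α + ψ_β x_α. Then there exist ε > 0 and a C¹ function h : (α₀ − ε, α₀ + ε) → ℝ with h(α₀)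 = 0 such that for (α,β) with |α − α₀| < ε, |β| < ε: F(α,β) = 0 if and only if β = h(α); and there is ε' ∈ (0, ε] such that: if G > 0 then h(α) > 0 for all 0 < |α − α₀| < ε' (the critical layer lies outside the fluid domain {β < 0} and touches the surface only at α₀), while if G < 0 then h(α) < 0 for all 0 < |α − α₀| < ε' (the critical layer lies inside the fluid and touches the surface at α₀). -/
open Set Filter Topology

/-- A function whose first nonvanishing Taylor coefficient at `a` is positive and of even order is
positive on a punctured neighbourhood of `a`. -/
theorem eventually_pos_of_iteratedDeriv_pos {g : ℝ → ℝ} {a : ℝ} {n : ℕ} (hg : ContDiffAt ℝ n g a)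
    (hn : Even n) (hzero : ∀ j < n, iteratedDeriv j g a = 0) (hpos : 0 < iteratedDeriv n g a) :
    ∀ᶠ x in 𝓝[≠] a, 0 < g x := by
  obtain ⟨u, hu, hgu⟩ := hg.contDiffOn le_rfl (by simp)
  obtain ⟨r, hr, hru⟩ := Metric.mem_nhds_iff.1 (by simpa using hu : u ∈ 𝓝 a)
  have ha : a ∈ Metric.ball a r := Metric.mem_ball_self hr
  have hT := taylor_isLittleO (convex_ball a r) ha (hgu.mono hru)
  rw [Metric.isOpen_ball.nhdsWithin_eq ha] at hT
  have hc : 0 < iteratedDeriv n g a / n.factorial := by positivity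
  have heval : ∀ x, taylorWithinEval g n (Metric.ball a r) a x
      = iteratedDeriv n g a / n.factorial * (x - a) ^ n := by
    intro x
    rw [taylor_within_apply, Finset.sum_range_succ, Finset.sum_eq_zero]
    · rw [iteratedDerivWithin_of_isOpen Metric.isOpen_ball ha, smul_eq_mul, zero_add]
      ring
    · intro j hj
      rw [iteratedDerivWithin_of_isOpen Metric.isOpen_ball ha, hzero j (Finset.mem_range.1 hj),
        smul_zero]
  filter_upwards [(hT.bound (half_pos hc)).filter_mono nhdsWithin_le_nhds,
    self_mem_nhdsWithin] with x hx hxa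
  have hxn : 0 < (x - a) ^ n := hn.pow_pos (sub_ne_zero.2 hxa)
  rw [heval, Real.norm_eq_abs, Real.norm_eq_abs, abs_of_pos hxn] at hx
  have := (abs_le.1 hx).1
  nlinarith [mul_pos hc hxn]

/-- If `F` is `C¹`, vanishes at `(a, 0)` with nonzero second partial derivative `d`, and is
positive on the punctured axis, then its zero set near `(a, 0)` is the graph of a `C¹` function
whose sign off `a` is opposite to that of `d`. -/
theorem exists_zeroSet_eq_graph_of_pos {F : ℝ × ℝ → ℝ} {a d : ℝ} (hF : ContDiffAt ℝ 1 F (a, 0))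
    (hF0 : F (a, 0) = 0) (hd : HasDerivAt (fun t => F (a, t)) d 0) (hd0 : d ≠ 0)
    (hpos : ∀ᶠ x in 𝓝[≠] a, 0 < F (x, 0)) :
    ∃ h : ℝ → ℝ, ContDiffAt ℝ 1 h a ∧ h a = 0 ∧
      (∀ᶠ p in 𝓝 (a, (0 : ℝ)), F p = 0 ↔ p.2 = h p.1) ∧ ∀ᶠ x in 𝓝[≠] a, d * h x < 0 := by
  have hstrict := hF.hasStrictFDerivAt one_ne_zero
  have hpartial : fderiv ℝ F (a, 0) (0, 1) = d := by
    have hcomp : HasDerivAt (fun t => F (a, t)) (fderiv ℝ F (a, 0) (0, 1)) 0 :=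
      hstrict.hasFDerivAt.comp_hasDerivAt (0 : ℝ)
        ((hasDerivAt_const (0 : ℝ) a).prodMk (hasDerivAt_id (0 : ℝ)))
    exact hcomp.unique hd
  have hlin : ∀ t, fderiv ℝ F (a, 0) (0, t) = d * t := by
    intro t
    have : ((0 : ℝ), t) = t • ((0 : ℝ), (1 : ℝ)) := by simp
    rw [this, map_smul, hpartial, smul_eq_mul, mul_comm]
  have hinv : (fderiv ℝ F (a, 0) ∘L .inr ℝ ℝ ℝ).IsInvertible := by
    refine ⟨ContinuousLinearEquiv.unitsEquivAut ℝ (Units.mk0 d hd0), ?_⟩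
    ext
    simp [hpartial]
  set h := hF.implicitFunction one_ne_zero hinv
  have hh0 : h a = 0 := hF.implicitFunction_apply_self one_ne_zero hinv
  have hhC : ContDiffAt ℝ 1 h a := hF.contDiffAt_implicitFunction one_ne_zero hinv
  refine ⟨h, hhC, hh0, ?_, ?_⟩
  · filter_upwards [hF.eventually_apply_eq_iff_implicitFunction one_ne_zero hinv] with p hp
    rw [← hF0, hp, eq_comm]
  · have hzero : ∀ᶠ x in 𝓝 a, F (x, h x) = 0 := by
      filter_upwards [hF.eventually_apply_implicitFunction one_ne_zero hinv] with x hx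
      rw [← hF0, ← hx]
    have htend : Tendsto (fun x => ((x, h x), (x, (0 : ℝ)))) (𝓝 a) (𝓝 ((a, 0), (a, 0))) := by
      have hcont : ContinuousAt (fun x => ((x, h x), (x, (0 : ℝ)))) a := by
        have := hhC.continuousAt
        fun_prop
      simpa [ContinuousAt, hh0] using hcont
    have hest := htend.eventually (hstrict.isLittleO.bound (half_pos (abs_pos.2 hd0)))
    filter_upwards [hzero.filter_mono nhdsWithin_le_nhds, hest.filter_mono nhdsWithin_le_nhds,
      hpos] with x hx hxe hxpos
    have hnorm : ‖(x, h x) - (x, (0 : ℝ))‖ = |h x| := by simp [Prod.norm_def]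
    rw [hnorm, hx, Prod.mk_sub_mk, sub_self, sub_zero, hlin, Real.norm_eq_abs] at hxe
    by_contra! hneg
    have habs : |d| * |h x| = d * h x := by rw [← abs_mul, abs_of_nonneg hneg]
    have := (abs_le.1 hxe).1
    nlinarith

theorem DifferentiableAt.fderiv_re_apply {z : ℂ → ℂ} {w : ℂ} (hz : DifferentiableAt ℂ z w)
    (v : ℂ) : fderiv ℝ (fun w => (z w).re) w v = (deriv z w * v).re := by
  have h := Complex.reCLM.hasFDerivAt.comp w (hz.hasDerivAt.hasFDerivAt.restrictScalars ℝ)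
  have h' : HasFDerivAt (fun w => (z w).re) _ w := h
  rw [h'.fderiv]
  simp [mul_comm]

theorem DifferentiableAt.fderiv_im_apply {z : ℂ → ℂ} {w : ℂ} (hz : DifferentiableAt ℂ z w)
    (v : ℂ) : fderiv ℝ (fun w => (z w).im) w v = (deriv z w * v).im := by
  have h := Complex.imCLM.hasFDerivAt.comp w (hz.hasDerivAt.hasFDerivAt.restrictScalars ℝ)
  have h' : HasFDerivAt (fun w => (z w).im) _ w := h
  rw [h'.fderiv]
  simp [mul_comm]

theorem FnumC_eq {z : ℂ → ℂ} {ψ : ℂ → ℝ} {w : ℂ} (hz : DifferentiableAt ℂ z w) :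
    FnumC z ψ w = fderiv ℝ ψ w 1 * (deriv z w).im + fderiv ℝ ψ w Complex.I * (deriv z w).re := by
  rw [FnumC, hz.fderiv_re_apply, hz.fderiv_im_apply, mul_one]

theorem contDiffAt_FnumC {z : ℂ → ℂ} {ψ : ℂ → ℝ} {w : ℂ} (hz : AnalyticAt ℂ z w)
    (hψ : ContDiffAt ℝ 2 ψ w) : ContDiffAt ℝ 1 (FnumC z ψ) w := by
  have hψ' : ContDiffAt ℝ 1 (fderiv ℝ ψ) w := hψ.fderiv_right (by norm_num)
  have hz' : ContDiffAt ℝ 1 (deriv z) w := hz.deriv.contDiffAt.restrict_scalars ℝ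
  have him : ContDiffAt ℝ 1 (fun ζ => (deriv z ζ).im) w :=
    Complex.imCLM.contDiff.contDiffAt.comp w hz'
  have hre : ContDiffAt ℝ 1 (fun ζ => (deriv z ζ).re) w :=
    Complex.reCLM.contDiff.contDiffAt.comp w hz'
  refine (((hψ'.clm_apply (contDiffAt_const (c := 1))).mul him).add
    ((hψ'.clm_apply (contDiffAt_const (c := Complex.I))).mul hre)).congr_of_eventuallyEq ?_
  filter_upwards [hz.eventually_analyticAt] with ζ hζ
  exact FnumC_eq hζ.differentiableAt

/-- The vertical derivative of `ψ_α y_α + ψ_β x_α` at a point where `ψ_α = x_α = 0`. By symmetry of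
second derivatives and the Cauchy-Riemann equations it only involves derivatives along `α`. -/
theorem hasDerivAt_FnumC_vertical {z : ℂ → ℂ} {ψ : ℂ → ℝ} {w : ℂ} {m : ℝ}
    (hz : AnalyticAt ℂ z w) (hψ : ContDiffAt ℝ 2 ψ w) (hψ1 : fderiv ℝ ψ w 1 = 0)
    (hre : (deriv z w).re = 0)
    (hm : HasDerivAt (fun t : ℝ => fderiv ℝ ψ (w + t) Complex.I) m 0) :
    HasDerivAt (fun t : ℝ => FnumC z ψ (w + t * Complex.I))
      (m * (deriv z w).im - fderiv ℝ ψ w Complex.I * (deriv (deriv z) w).im) 0 := by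
  have hψ' : HasFDerivAt (fderiv ℝ ψ) (fderiv ℝ (fderiv ℝ ψ) w) w :=
    ((hψ.fderiv_right (m := 1) (by norm_num)).differentiableAt one_ne_zero).hasFDerivAt
  have hhor : HasDerivAt (fun t : ℝ => w + t) 1 0 := by
    simpa using (Complex.ofRealCLM.hasDerivAt (x := (0 : ℝ))).const_add w
  have hver : HasDerivAt (fun t : ℝ => w + t * Complex.I) Complex.I 0 := by
    simpa using ((Complex.ofRealCLM.hasDerivAt (x := (0 : ℝ))).mul_const Complex.I).const_add w
  have hψhor : HasDerivAt (fun t : ℝ => fderiv ℝ ψ (w + t)) (fderiv ℝ (fderiv ℝ ψ) w 1) 0 :=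
    HasFDerivAt.comp_hasDerivAt (0 : ℝ) (by simpa using hψ') hhor
  have hψver : HasDerivAt (fun t : ℝ => fderiv ℝ ψ (w + t * Complex.I))
      (fderiv ℝ (fderiv ℝ ψ) w Complex.I) 0 :=
    HasFDerivAt.comp_hasDerivAt (0 : ℝ) (by simpa using hψ') hver
  have hm' : fderiv ℝ (fderiv ℝ ψ) w 1 Complex.I = m := by
    have := hψhor.clm_apply (hasDerivAt_const (0 : ℝ) Complex.I)
    simpa using this.unique hm
  have hsymm : fderiv ℝ (fderiv ℝ ψ) w Complex.I 1 = m := by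
    rw [← hm']
    exact hψ.isSymmSndFDerivAt (by simp) _ _
  have hz' : HasDerivAt (fun t : ℝ => deriv z (w + t * Complex.I))
      (deriv (deriv z) w * Complex.I) 0 := by
    have h2 := hz.deriv.differentiableAt.hasDerivAt
    have := HasDerivAt.comp (𝕜 := ℝ) (𝕜' := ℂ) (h₂ := deriv z)
      (h := fun t : ℝ => w + t * Complex.I) (h₂' := deriv (deriv z) w) (0 : ℝ)
      (by simpa using h2) hver
    exact this
  have hzim := Complex.imCLM.hasFDerivAt.comp_hasDerivAt (0 : ℝ) hz'
  have hzre := Complex.reCLM.hasFDerivAt.comp_hasDerivAt (0 : ℝ) hz'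
  have h1 := hψver.clm_apply (hasDerivAt_const (0 : ℝ) (1 : ℂ))
  have h2 := hψver.clm_apply (hasDerivAt_const (0 : ℝ) Complex.I)
  have hsum := (h1.mul hzim).add (h2.mul hzre)
  refine (hsum.congr_of_eventuallyEq ?_).congr_deriv ?_
  · have htend : Tendsto (fun t : ℝ => w + t * Complex.I) (𝓝 0) (𝓝 w) := by
      simpa [ContinuousAt] using hver.continuousAt
    filter_upwards [htend.eventually hz.eventually_analyticAt] with t ht
    exact FnumC_eq ht.differentiableAt
  · simp [hsymm, hψ1, hre]
    ring

/-- The derivative along the surface of the tangential speed prescribed by Bernoulli's law, at a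
point where the profile is vertical. -/
theorem hasDerivAt_bernoulli_speed {z : ℂ → ℂ} {w : ℂ} (hz : AnalyticAt ℂ z w) {G B : ℝ}
    (hre : (deriv z w).re = 0) (him : 0 < (deriv z w).im) (hB : 0 < B - G * (z w).im) :
    HasDerivAt (fun t : ℝ => √(2 * (B - G * (z (w + t)).im) *
        ((deriv z (w + t)).re ^ 2 + (deriv z (w + t)).im ^ 2)))
      ((-G * (deriv z w).im ^ 3
          + 2 * (B - G * (z w).im) * (deriv z w).im * (deriv (deriv z) w).im)
        / √(2 * (B - G * (z w).im) * (deriv z w).im ^ 2)) 0 := by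
  have hhor : HasDerivAt (fun t : ℝ => w + t) 1 0 := by
    simpa using (Complex.ofRealCLM.hasDerivAt (x := (0 : ℝ))).const_add w
  have hline : ∀ g : ℂ → ℂ, AnalyticAt ℂ g w →
      HasDerivAt (fun t : ℝ => g (w + t)) (deriv g w) 0 := by
    intro g hg
    have := HasDerivAt.comp (𝕜 := ℝ) (𝕜' := ℂ) (h₂ := g)
      (h := fun t : ℝ => w + t) (h₂' := deriv g w) (0 : ℝ)
      (by simpa using hg.differentiableAt.hasDerivAt) hhor
    rw [mul_one] at this
    exact this
  have hy := Complex.imCLM.hasFDerivAt.comp_hasDerivAt (0 : ℝ) (hline z hz)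
  have hp := Complex.reCLM.hasFDerivAt.comp_hasDerivAt (0 : ℝ) (hline _ hz.deriv)
  have hq := Complex.imCLM.hasFDerivAt.comp_hasDerivAt (0 : ℝ) (hline _ hz.deriv)
  have hQ := (((hy.const_mul G).const_sub B).const_mul 2).mul ((hp.pow 2).add (hq.pow 2))
  have hQpos : 0 < 2 * (B - G * (z w).im) * (deriv z w).im ^ 2 := by positivity
  refine (hQ.sqrt ?_).congr_deriv ?_
  · simpa [hre] using hQpos.ne'
  · simp [hre]
    field_simp

theorem stmt_12 (U : Set ℂ) (hU : IsOpen U) (α₀ : ℝ) (hα₀ : (α₀ : ℂ) ∈ U)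
    (z : ℂ → ℂ) (hz : DifferentiableOn ℂ z U)
    (ψ : ℂ → ℝ) (hψ : ContDiffOn ℝ (⊤ : ℕ∞) ψ U) (G B : ℝ) (hG : G ≠ 0)
    (ha : ∀ α : ℝ, (α : ℂ) ∈ U → ψ (α : ℂ) = 0)
    (hb : ∀ α : ℝ, (α : ℂ) ∈ U →
      fderiv ℝ ψ (α : ℂ) Complex.I
        = Real.sqrt (2 * (B - G * (z (α : ℂ)).im) *
            ((fderiv ℝ (fun w => (z w).re) (α : ℂ) 1) ^ 2
              + (fderiv ℝ (fun w => (z w).im) (α : ℂ) 1) ^ 2)))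
    (hc : fderiv ℝ (fun w => (z w).re) (α₀ : ℂ) 1 = 0)
    (hd : 0 < fderiv ℝ (fun w => (z w).im) (α₀ : ℂ) 1)
    (he : 0 < B - G * (z (α₀ : ℂ)).im)
    (k : ℕ) (hk2 : 2 ≤ k)
    (hkmin : ∀ j : ℕ, 1 ≤ j → j < k → iteratedDeriv j (fun α : ℝ => (z (α : ℂ)).re) α₀ = 0)
    (hkodd : Odd k)
    (hkpos : 0 < iteratedDeriv k (fun α : ℝ => (z (α : ℂ)).re) α₀) :
    ∃ ε > (0 : ℝ), ∃ h : ℝ → ℝ,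
      ContDiffOn ℝ 1 h (Set.Ioo (α₀ - ε) (α₀ + ε)) ∧
      h α₀ = 0 ∧
      (∀ α β : ℝ, |α - α₀| < ε → |β| < ε →
        ((α : ℂ) + (β : ℂ) * Complex.I ∈ U ∧
          (FnumC z ψ ((α : ℂ) + (β : ℂ) * Complex.I) = 0 ↔ β = h α))) ∧
      ∃ ε' : ℝ, 0 < ε' ∧ ε' ≤ ε ∧
        (0 < G → ∀ α : ℝ, α ≠ α₀ → |α - α₀| < ε' → 0 < h α) ∧
        (G < 0 → ∀ α : ℝ, α ≠ α₀ → |α - α₀| < ε' → h α < 0) := by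
  have hUn : U ∈ 𝓝 (α₀ : ℂ) := hU.mem_nhds hα₀
  have hzan : ∀ w ∈ U, AnalyticAt ℂ z w := fun w hw => hz.analyticAt (hU.mem_nhds hw)
  have hz₀ := hzan _ hα₀
  have hψ2 : ContDiffAt ℝ 2 ψ (α₀ : ℂ) := (hψ.contDiffAt hUn).of_le (by
    change ((2 : ℕ∞) : WithTop ℕ∞) ≤ ((⊤ : ℕ∞) : WithTop ℕ∞)
    exact WithTop.coe_le_coe.2 le_top)
  rw [hz₀.differentiableAt.fderiv_re_apply, mul_one] at hc
  rw [hz₀.differentiableAt.fderiv_im_apply, mul_one] at hd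
  have hofReal : Tendsto (fun α : ℝ => (α : ℂ)) (𝓝 α₀) (𝓝 (α₀ : ℂ)) :=
    Complex.continuous_ofReal.continuousAt
  have hUreal : ∀ᶠ α : ℝ in 𝓝 α₀, (α : ℂ) ∈ U := hofReal.eventually hUn
  have hb' : ∀ α : ℝ, (α : ℂ) ∈ U → fderiv ℝ ψ (α : ℂ) Complex.I
      = √(2 * (B - G * (z (α : ℂ)).im) * ((deriv z α).re ^ 2 + (deriv z α).im ^ 2)) := by
    intro α hα
    rw [hb α hα, (hzan _ hα).differentiableAt.fderiv_re_apply,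
      (hzan _ hα).differentiableAt.fderiv_im_apply, mul_one]
  have hψα : ∀ α : ℝ, (α : ℂ) ∈ U → fderiv ℝ ψ (α : ℂ) 1 = 0 := by
    intro α hα
    have hψd : HasFDerivAt ψ (fderiv ℝ ψ α) (α : ℂ) :=
      ((hψ.contDiffAt (hU.mem_nhds hα)).differentiableAt (by simp)).hasFDerivAt
    have hline : HasDerivAt (fun t : ℝ => ψ (t : ℂ)) (fderiv ℝ ψ (α : ℂ) 1) α := by
      have := hψd.comp_hasDerivAt α (Complex.ofRealCLM.hasDerivAt (x := α))
      rw [Complex.ofRealCLM_apply, Complex.ofReal_one] at this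
      exact this
    refine hline.unique ((hasDerivAt_const α (0 : ℝ)).congr_of_eventuallyEq ?_)
    filter_upwards [Complex.continuous_ofReal.continuousAt.eventually (hU.mem_nhds hα)] with t ht
    exact ha t ht
  set q := (deriv z α₀).im with hq
  set b := B - G * (z (α₀ : ℂ)).im
  set s := √(2 * b * q ^ 2) with hs
  have hspos : 0 < s := Real.sqrt_pos.2 (by positivity)
  have hssq : s ^ 2 = 2 * b * q ^ 2 := Real.sq_sqrt (by positivity)
  have hψβ₀ : fderiv ℝ ψ (α₀ : ℂ) Complex.I = s := by
    rw [hb' α₀ hα₀, hc, hs]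
    congr 1
    ring
  have hψαβ : HasDerivAt (fun t : ℝ => fderiv ℝ ψ (α₀ + t) Complex.I)
      ((-G * q ^ 3 + 2 * b * q * (deriv (deriv z) α₀).im) / s) 0 := by
    refine (hasDerivAt_bernoulli_speed hz₀ hc hd he).congr_of_eventuallyEq ?_
    have htend : Tendsto (fun t : ℝ => α₀ + t) (𝓝 0) (𝓝 α₀) := by
      simpa using (tendsto_id (x := 𝓝 (0 : ℝ))).const_add α₀
    filter_upwards [htend.eventually hUreal] with t ht
    simpa using hb' (α₀ + t) ht
  have hFβ := hasDerivAt_FnumC_vertical hz₀ hψ2 (hψα α₀ hα₀) hc hψαβ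
  have hFβ_eq : (-G * q ^ 3 + 2 * b * q * (deriv (deriv z) α₀).im) / s * q
      - fderiv ℝ ψ (α₀ : ℂ) Complex.I * (deriv (deriv z) α₀).im = -G * (q ^ 4 / s) := by
    rw [hψβ₀]
    field_simp
    rw [hssq]
    ring
  rw [← hq, hFβ_eq] at hFβ
  have hqs : 0 < q ^ 4 / s := by positivity
  have hxderiv : ∀ᶠ α : ℝ in 𝓝 α₀,
      deriv (fun α : ℝ => (z (α : ℂ)).re) α = (deriv z α).re := by
    filter_upwards [hUreal] with α hα
    exact (hzan _ hα).differentiableAt.hasDerivAt.real_of_complex.deriv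
  have hxsmooth : ContDiffAt ℝ (k - 1 : ℕ) (deriv (fun α : ℝ => (z (α : ℂ)).re)) α₀ := by
    have hz' : ContDiffAt ℝ (k - 1 : ℕ) (deriv z) (α₀ : ℂ) :=
      hz₀.deriv.contDiffAt.restrict_scalars ℝ
    have h1 := Complex.reCLM.contDiff.contDiffAt.comp α₀
      (hz'.comp α₀ Complex.ofRealCLM.contDiff.contDiffAt)
    exact h1.congr_of_eventuallyEq hxderiv
  have hxpos : ∀ᶠ α in 𝓝[≠] α₀, 0 < deriv (fun α : ℝ => (z (α : ℂ)).re) α := by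
    refine eventually_pos_of_iteratedDeriv_pos hxsmooth (hkodd.tsub_odd odd_one) ?_ ?_
    · intro j hj
      rw [← iteratedDeriv_succ']
      exact hkmin (j + 1) (by omega) (by omega)
    · rw [← iteratedDeriv_succ', Nat.sub_add_cancel (by omega)]
      exact hkpos
  have hψβpos : ∀ᶠ α : ℝ in 𝓝 α₀, 0 < fderiv ℝ ψ (α : ℂ) Complex.I := by
    have hcont : ContinuousAt (fun w => fderiv ℝ ψ w Complex.I) (α₀ : ℂ) :=
      ((hψ2.fderiv_right (m := 1) (by norm_num)).clm_apply contDiffAt_const).continuousAt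
    exact hofReal.eventually (hcont.eventually (lt_mem_nhds (hspos.trans_eq hψβ₀.symm)))
  have hFpos : ∀ᶠ α : ℝ in 𝓝[≠] α₀, 0 < FnumC z ψ ((α : ℂ) + (0 : ℝ) * Complex.I) := by
    filter_upwards [hUreal.filter_mono nhdsWithin_le_nhds, hxpos,
      hψβpos.filter_mono nhdsWithin_le_nhds, hxderiv.filter_mono nhdsWithin_le_nhds]
      with α hα hx hψβ hxd
    rw [Complex.ofReal_zero, zero_mul, add_zero, FnumC_eq (hzan _ hα).differentiableAt, hψα α hα,
      zero_mul, zero_add, ← hxd]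
    exact mul_pos hψβ hx
  have hΦ : ContDiff ℝ 1 (fun p : ℝ × ℝ => (p.1 : ℂ) + p.2 * Complex.I) :=
    (Complex.ofRealCLM.contDiff.comp contDiff_fst).add
      ((Complex.ofRealCLM.contDiff.comp contDiff_snd).mul contDiff_const)
  have hFC : ContDiffAt ℝ 1 (fun p : ℝ × ℝ => FnumC z ψ ((p.1 : ℂ) + p.2 * Complex.I))
      (α₀, 0) :=
    ContDiffAt.comp (g := FnumC z ψ) (α₀, (0 : ℝ))
      (by simpa using contDiffAt_FnumC hz₀ hψ2) hΦ.contDiffAt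
  have hF0 : FnumC z ψ ((α₀ : ℂ) + (0 : ℝ) * Complex.I) = 0 := by
    simp [FnumC_eq hz₀.differentiableAt, hψα α₀ hα₀, hc]
  obtain ⟨h, hhC, hh0, hiff, hsign⟩ := exists_zeroSet_eq_graph_of_pos hFC hF0 hFβ
    (mul_ne_zero (neg_ne_zero.2 hG) hqs.ne') hFpos
  have hUprod : ∀ᶠ p : ℝ × ℝ in 𝓝 (α₀, 0), (p.1 : ℂ) + p.2 * Complex.I ∈ U :=
    hΦ.continuous.continuousAt.eventually (hU.mem_nhds (by simpa using hα₀))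
  obtain ⟨ε₁, hε₁, hball⟩ := Metric.eventually_nhds_iff.1 (hUprod.and hiff)
  obtain ⟨ε₂, hε₂, hC⟩ := Metric.eventually_nhds_iff.1 (hhC.eventually (by simp))
  obtain ⟨ε₃, hε₃, hS⟩ := Metric.eventually_nhds_iff.1 (eventually_nhdsWithin_iff.1 hsign)
  refine ⟨min ε₁ ε₂, lt_min hε₁ hε₂, h, ?_, hh0, ?_, min (min ε₁ ε₂) ε₃,
    lt_min (lt_min hε₁ hε₂) hε₃, min_le_left _ _, ?_, ?_⟩
  · intro α hα
    rw [← Real.ball_eq_Ioo] at hα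
    exact (hC (lt_of_lt_of_le hα (min_le_right _ _))).contDiffWithinAt
  · intro α β hα hβ
    refine hball (y := (α, β)) ?_
    rw [Prod.dist_eq, max_lt_iff, Real.dist_eq, Real.dist_eq, sub_zero]
    exact ⟨hα.trans_le (min_le_left _ _), hβ.trans_le (min_le_left _ _)⟩
  · intro hGpos α hne hα
    have hlt := hS (y := α) (hα.trans_le (min_le_right _ _)) hne
    rw [neg_mul, neg_mul, neg_neg_iff_pos] at hlt
    exact pos_of_mul_pos_right hlt (by positivity)
  · intro hGneg α hne hα
    have hlt := hS (y := α) (hα.trans_le (min_le_right _ _)) hne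
    exact neg_of_mul_neg_right hlt (mul_pos (neg_pos.2 hGneg) hqs).le
end

section
/- Let a ∈ (0, 1/4), r = √a, Ω = Ω(a) = (1−a)/(1−3a), B = B(a) = (1/2)((1+a)/(1−3a))², and define the 2π-periodic real-analytic function y(α) := −4r(cos α + r)/(1 + 2r·cos α + r²). Then for every α ∈ ℝ: (1/2)·(1 + Ω·(y(α) + y(α)·H(y')(α) − H(y·y')(α)))² = B·((1 + H(y')(α))² + y'(α)²), where y' = dy/dα. That is, y solves the infinite-depth Babenko-type equation with gravity G = 0, vorticity parameter Ω(a), and Bernoulli constant B(a). -/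
/-- `g` is the periodic Hilbert transform of `f`: both are given by a common (absolutely
summable) family of Fourier coefficients `c`, with `g` obtained from `f` by the Fourier
multiplier `−i·sgn(n)`. -/
def IsHilbertPair (f g : ℝ → ℝ) : Prop :=
  ∃ c : ℤ → ℂ,
    (∀ θ : ℝ, HasSum (fun n : ℤ => c n * Complex.exp ((n : ℂ) * (θ : ℂ) * Complex.I))
      ((f θ : ℂ))) ∧
    (∀ θ : ℝ, HasSum (fun n : ℤ =>
      (-Complex.I * ((Int.sign n : ℤ) : ℂ)) * (c n * Complex.exp ((n : ℂ) * (θ : ℂ) * Complex.I)))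
      ((g θ : ℂ)))

lemma HasSum.of_forall_eq {ι : Type*} {f g : ι → ℂ} {s : ℂ} (hg : HasSum g s)
    (h : ∀ i, f i = g i) : HasSum f s := by
  rwa [funext h]

open Complex in
/-- Orthogonality of the exponentials on a period. -/
lemma integral_exp_int_mul_I (k : ℤ) :
    ∫ θ in (0 : ℝ)..2 * Real.pi, exp ((k : ℂ) * (θ : ℂ) * I)
      = if k = 0 then ((2 * Real.pi : ℝ) : ℂ) else 0 := by
  split_ifs with hk
  · simp [hk]
  · have hk' : (k : ℂ) * I ≠ 0 := mul_ne_zero (by exact_mod_cast hk) I_ne_zero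
    have h := integral_exp_mul_complex (a := 0) (b := 2 * Real.pi) hk'
    have e : ∀ θ : ℝ, (k : ℂ) * (θ : ℂ) * I = (k : ℂ) * I * θ := fun θ => by ring
    simp_rw [e]
    rw [h]
    have e2 : (k : ℂ) * I * ((2 * Real.pi : ℝ) : ℂ) = k * (2 * Real.pi * I) := by
      push_cast; ring
    rw [e2, exp_int_mul_two_pi_mul_I]
    simp

open Complex in
/-- The coefficients of a pointwise convergent trigonometric series are the Fourier coefficients
of its sum. -/
lemma coeff_eq_integral_of_hasSum {c : ℤ → ℂ} {f : ℝ → ℂ}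
    (h : ∀ θ : ℝ, HasSum (fun n : ℤ => c n * exp ((n : ℂ) * (θ : ℂ) * I)) (f θ)) (m : ℤ) :
    ∫ θ in (0 : ℝ)..2 * Real.pi, f θ * exp (((-m : ℤ) : ℂ) * (θ : ℂ) * I)
      = c m * ((2 * Real.pi : ℝ) : ℂ) := by
  have hc : Summable fun n => ‖c n‖ := by
    have := (h 0).summable.norm
    simpa using this
  have hexp : ∀ (n : ℤ) (θ : ℝ), ‖exp ((n : ℂ) * (θ : ℂ) * I)‖ = 1 := fun n θ => by
    have := norm_exp_ofReal_mul_I (n * θ)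
    push_cast at this
    exact this
  have hterm : ∀ (n : ℤ) (θ : ℝ), c n * exp ((n : ℂ) * (θ : ℂ) * I) *
      exp (((-m : ℤ) : ℂ) * (θ : ℂ) * I) = c n * exp (((n - m : ℤ) : ℂ) * (θ : ℂ) * I) := by
    intro n θ
    rw [mul_assoc, ← exp_add]
    congr 2
    push_cast
    ring
  have hs := intervalIntegral.hasSum_integral_of_dominated_convergence
    (μ := MeasureTheory.volume) (a := 0) (b := 2 * Real.pi)
    (F := fun (n : ℤ) (θ : ℝ) => c n * exp (((n - m : ℤ) : ℂ) * (θ : ℂ) * I))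
    (f := fun θ => f θ * exp (((-m : ℤ) : ℂ) * (θ : ℂ) * I))
    (fun n _ => ‖c n‖)
    (fun n => Continuous.aestronglyMeasurable (by fun_prop))
    (fun n => Filter.Eventually.of_forall fun θ _ => by rw [norm_mul, hexp, mul_one])
    (Filter.Eventually.of_forall fun _ _ => hc)
    (by simp)
    (Filter.Eventually.of_forall fun θ _ => by
      have := (h θ).mul_right (exp (((-m : ℤ) : ℂ) * (θ : ℂ) * I))
      simpa only [hterm] using this)
  refine hs.unique ?_
  simp_rw [intervalIntegral.integral_const_mul, integral_exp_int_mul_I]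
  refine HasSum.of_forall_eq (hasSum_ite_eq m (c m * ((2 * Real.pi : ℝ) : ℂ))) fun n => ?_
  by_cases hn : n = m
  · simp [hn]
  · simp [hn, sub_eq_zero]

/-- The periodic Hilbert transform is unique. -/
lemma IsHilbertPair.unique {f g g' : ℝ → ℝ} (h : IsHilbertPair f g) (h' : IsHilbertPair f g') :
    g = g' := by
  obtain ⟨c, hf, hg⟩ := h
  obtain ⟨c', hf', hg'⟩ := h'
  have hcc : c = c' := by
    funext m
    have e := (coeff_eq_integral_of_hasSum hf m).symm.trans (coeff_eq_integral_of_hasSum hf' m)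
    exact mul_right_cancel₀ (by exact_mod_cast Real.two_pi_pos.ne') e
  subst hcc
  funext θ
  exact_mod_cast (hg θ).unique (hg' θ)

open Complex ComplexConjugate in
/-- If `f = Φ + conj Φ`, where `Φ` has only positive frequencies, then the Hilbert transform of `f`
is `-i Φ + conj (-i Φ)`. -/
lemma IsHilbertPair.eq_of_hasSum {f g : ℝ → ℝ} (h : IsHilbertPair f g) (b : ℕ → ℂ) (Φ : ℝ → ℂ)
    (hΦ : ∀ θ : ℝ, HasSum (fun n : ℕ => b n * exp ((θ : ℂ) * I) ^ (n + 1)) (Φ θ))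
    (hf : ∀ θ, (f θ : ℂ) = Φ θ + conj (Φ θ)) (θ : ℝ) :
    (g θ : ℂ) = -I * Φ θ + I * conj (Φ θ) := by
  have hreal : ∀ θ, (((-I * Φ θ + I * conj (Φ θ)).re : ℝ) : ℂ) = -I * Φ θ + I * conj (Φ θ) := by
    intro θ
    apply Complex.ext <;> simp
  suffices hp : IsHilbertPair f (fun θ => (-I * Φ θ + I * conj (Φ θ)).re) by
    rw [h.unique hp, hreal]
  have hpos : ∀ (θ : ℝ) (n : ℕ),
      exp ((((n + 1 : ℕ) : ℤ) : ℂ) * (θ : ℂ) * I) = exp ((θ : ℂ) * I) ^ (n + 1) := by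
    intro θ n
    rw [← exp_nat_mul]
    congr 1
    push_cast
    ring
  have hneg : ∀ (θ : ℝ) (n : ℕ),
      exp (((Int.negSucc n : ℤ) : ℂ) * (θ : ℂ) * I) = conj (exp ((θ : ℂ) * I) ^ (n + 1)) := by
    intro θ n
    rw [← exp_nat_mul, ← exp_conj]
    congr 1
    simp [Int.cast_negSucc]
    ring
  have hΦc : ∀ θ : ℝ, HasSum (fun n : ℕ => conj (b n) * conj (exp ((θ : ℂ) * I) ^ (n + 1)))
      (conj (Φ θ)) := by
    intro θ
    have := (hΦ θ).map (starRingEnd ℂ) continuous_conj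
    simpa only [Function.comp_def, map_mul] using this
  let c : ℤ → ℂ := fun n => match n with
    | Int.ofNat 0 => 0
    | Int.ofNat (n + 1) => b n
    | Int.negSucc n => conj (b n)
  have key : ∀ (F : ℤ → ℂ) (s t : ℂ), F 0 = 0 → HasSum (fun n : ℕ => F ((n + 1 : ℕ) : ℤ)) s →
      HasSum (fun n : ℕ => F (Int.negSucc n)) t → HasSum F (s + t) := by
    intro F s t h0 hs ht
    refine HasSum.of_nat_of_neg_add_one (f := F) ?_ ?_
    · rw [← hasSum_nat_add_iff' 1]
      simpa [h0] using hs
    · simpa only [Int.negSucc_eq, neg_add_rev] using ht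
  refine ⟨c, fun θ => ?_, fun θ => ?_⟩
  · rw [hf]
    refine key _ _ _ (by simp [c]) ?_ ?_
    · simp only [hpos]
      exact hΦ θ
    · simp only [hneg]
      exact hΦc θ
  · simp only [hreal]
    refine key _ _ _ (by simp) ?_ ?_
    · simp only [hpos]
      refine HasSum.of_forall_eq ((hΦ θ).mul_left (-I)) fun n => ?_
      rw [Int.sign_natCast_of_ne_zero (Nat.succ_ne_zero n), Int.cast_one, mul_one]
    · simp only [hneg]
      refine HasSum.of_forall_eq ((hΦc θ).mul_left I) fun n => ?_
      simp [c]

open Complex ComplexConjugate in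
/-- The Hilbert transform of a real function whose positive frequency part is a combination of
`z / (1 + r z) ^ 2` and `z / (1 + r z) ^ 3`, `z = exp (i θ)`. -/
lemma IsHilbertPair.eq_of_rational {f g : ℝ → ℝ} (h : IsHilbertPair f g) {r : ℝ} (hr : |r| < 1)
    (p q : ℂ) (Φ : ℝ → ℂ)
    (hΦ : ∀ θ : ℝ, Φ θ = p * (exp (θ * I) / (1 + r * exp (θ * I)) ^ 2) +
      q * (exp (θ * I) / (1 + r * exp (θ * I)) ^ 3))
    (hf : ∀ θ, (f θ : ℂ) = Φ θ + conj (Φ θ)) (θ : ℝ) :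
    (g θ : ℂ) = -I * Φ θ + I * conj (Φ θ) := by
  refine h.eq_of_hasSum (fun n => p * ((n + 1).choose 1 * (-r : ℂ) ^ n) +
    q * ((n + 2).choose 2 * (-r : ℂ) ^ n)) Φ (fun θ => ?_) hf θ
  have hz : ‖(-r : ℂ) * exp (θ * I)‖ < 1 := by
    rw [norm_mul, norm_exp_ofReal_mul_I, norm_neg, norm_real, Real.norm_eq_abs, mul_one]
    exact hr
  have h2 := ((hasSum_choose_mul_geometric_of_norm_lt_one 1 hz).mul_left (p * exp (θ * I))).add
    ((hasSum_choose_mul_geometric_of_norm_lt_one 2 hz).mul_left (q * exp (θ * I)))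
  rw [hΦ]
  rw [neg_mul, sub_neg_eq_add] at h2
  have e : p * (exp (θ * I) / (1 + r * exp (θ * I)) ^ 2) +
      q * (exp (θ * I) / (1 + r * exp (θ * I)) ^ 3) =
      p * exp (θ * I) * (1 / (1 + r * exp (θ * I)) ^ (1 + 1)) +
      q * exp (θ * I) * (1 / (1 + r * exp (θ * I)) ^ (2 + 1)) := by ring
  rw [e]
  refine HasSum.of_forall_eq h2 fun n => ?_
  rw [← neg_mul, mul_pow]
  ring

theorem stmt_16 (a : ℝ) (ha : a ∈ Set.Ioo (0 : ℝ) (1 / 4))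
    (y Hy' Hyy' : ℝ → ℝ)
    (hy : y = fun α => -4 * Real.sqrt a * (Real.cos α + Real.sqrt a) /
      (1 + 2 * Real.sqrt a * Real.cos α + (Real.sqrt a) ^ 2))
    (h1 : IsHilbertPair (deriv y) Hy')
    (h2 : IsHilbertPair (fun α => y α * deriv y α) Hyy') :
    ∀ α : ℝ,
      (1 / 2) * (1 + Om a * (y α + y α * Hy' α - Hyy' α)) ^ 2
        = Bc a * ((1 + Hy' α) ^ 2 + (deriv y α) ^ 2) := by
  obtain ⟨ha0, ha1⟩ := ha
  obtain ⟨r, hr⟩ : ∃ r, r = Real.sqrt a := ⟨_, rfl⟩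
  have hr0 : 0 < r := hr ▸ Real.sqrt_pos.2 ha0
  have har : a = r ^ 2 := by rw [hr, Real.sq_sqrt ha0.le]
  have hr1 : r < 1 := by nlinarith
  rw [← hr] at hy
  subst har
  have hD : ∀ α : ℝ, 1 + 2 * r * Real.cos α + r ^ 2 ≠ 0 := fun α => by
    nlinarith [Real.neg_one_le_cos α, mul_pos hr0 hr0, sq_nonneg (1 - r),
      mul_nonneg hr0.le (by linarith [Real.neg_one_le_cos α] : 0 ≤ 1 + Real.cos α),
      pow_pos (sub_pos.2 hr1) 2]
  have hdy : ∀ α, deriv y α =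
      4 * r * Real.sin α * (1 - r ^ 2) / (1 + 2 * r * Real.cos α + r ^ 2) ^ 2 := by
    intro α
    rw [hy]
    have hN : HasDerivAt (fun α => -4 * r * (Real.cos α + r)) (-4 * r * (-Real.sin α)) α :=
      ((Real.hasDerivAt_cos α).add_const r).const_mul _
    have hDd : HasDerivAt (fun α => 1 + 2 * r * Real.cos α + r ^ 2)
        (2 * r * (-Real.sin α)) α :=
      (((Real.hasDerivAt_cos α).const_mul (2 * r)).const_add 1).add_const _
    refine (hN.div hDd (hD α)).deriv.trans ?_
    congr 1
    ring
  have hI : Complex.I ^ 2 = -1 := Complex.I_sq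
  -- everything in terms of `E = exp (i α)`
  have hE0 : ∀ α : ℝ, Complex.exp (α * Complex.I) ≠ 0 := fun α => Complex.exp_ne_zero _
  have hconj : ∀ α : ℝ, (starRingEnd ℂ) (Complex.exp (α * Complex.I))
      = (Complex.exp (α * Complex.I))⁻¹ := fun α => by
    rw [← Complex.exp_conj, ← Complex.exp_neg]
    simp
  have hcos : ∀ α : ℝ, (Complex.cos α) =
      (Complex.exp (α * Complex.I) + (Complex.exp (α * Complex.I))⁻¹) / 2 := fun α => by
    rw [← Complex.exp_neg, Complex.cos, neg_mul]
  have hsin : ∀ α : ℝ, (Complex.sin α) =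
      ((Complex.exp (α * Complex.I))⁻¹ - Complex.exp (α * Complex.I)) * Complex.I / 2 :=
    fun α => by
      rw [← Complex.exp_neg, Complex.sin, neg_mul]
  have hDE : ∀ α : ℝ, (1 + r * Complex.exp (α * Complex.I)) *
      (1 + r * (Complex.exp (α * Complex.I))⁻¹) = 1 + 2 * r * Complex.cos α + r ^ 2 := fun α => by
    rw [hcos]
    field_simp [hE0 α]
    ring
  have hDC : ∀ α : ℝ, (1 + 2 * r * Complex.cos α + r ^ 2 : ℂ) ≠ 0 := fun α => by
    exact_mod_cast hD α
  have hp : ∀ α : ℝ, (1 + r * Complex.exp (α * Complex.I) : ℂ) ≠ 0 := fun α =>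
    left_ne_zero_of_mul (hDE α ▸ hDC α)
  have hm : ∀ α : ℝ, (Complex.exp (α * Complex.I) + r : ℂ) ≠ 0 := fun α h0 => by
    refine right_ne_zero_of_mul (hDE α ▸ hDC α) ?_
    field_simp [hE0 α]
    simpa using h0
  have hrC : (1 - r ^ 2 : ℂ) ≠ 0 := by
    have : 1 - r ^ 2 ≠ 0 := by nlinarith
    exact_mod_cast this
  have hr3 : (1 - 3 * r ^ 2 : ℂ) ≠ 0 := by
    have : 1 - 3 * r ^ 2 ≠ 0 := by nlinarith
    exact_mod_cast this
  have hyC : ∀ α : ℝ, (y α : ℂ) = -4 * r * ((Complex.exp (α * Complex.I) +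
      (Complex.exp (α * Complex.I))⁻¹) / 2 + r) / ((1 + r * Complex.exp (α * Complex.I)) *
      (1 + r * (Complex.exp (α * Complex.I))⁻¹)) := fun α => by
    rw [hDE, hy, ← hcos]
    push_cast
    rfl
  have hdyC : ∀ α : ℝ, ((deriv y α : ℝ) : ℂ) = 4 * r * (((Complex.exp (α * Complex.I))⁻¹ -
      Complex.exp (α * Complex.I)) * Complex.I / 2) * (1 - r ^ 2) /
      ((1 + r * Complex.exp (α * Complex.I)) *
      (1 + r * (Complex.exp (α * Complex.I))⁻¹)) ^ 2 := fun α => by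
    rw [hDE, hdy, ← hsin]
    push_cast
    rfl
  have habs : |r| < 1 := by rwa [abs_of_pos hr0]
  have H1 := h1.eq_of_rational habs (-2 * r * Complex.I) 0 _ (fun _ => rfl) (fun α => by
    rw [hdyC]
    simp only [map_add, map_mul, map_div₀, map_pow, map_neg, map_one, map_zero, Complex.conj_I,
      Complex.conj_ofReal, hconj, map_ofNat]
    have := hE0 α
    have := hp α
    have := hm α
    generalize Complex.exp (α * Complex.I) = E at *
    field_simp
    ring)
  have H2 := h2.eq_of_rational habs
    (Complex.I * (4 * r - 4 * r ^ 3 / (1 - r ^ 2))) (-4 * r * Complex.I) _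
    (fun _ => rfl) (fun α => by
    push_cast
    rw [hdyC, hyC]
    simp only [map_add, map_sub, map_mul, map_div₀, map_pow, map_neg, map_one, Complex.conj_I,
      Complex.conj_ofReal, hconj, map_ofNat]
    have := hE0 α
    have := hp α
    have := hm α
    generalize Complex.exp (α * Complex.I) = E at *
    field_simp
    ring)
  intro α
  have K1 : (Hy' α : ℂ) = -2 * r * (Complex.exp (α * Complex.I) /
      (1 + r * Complex.exp (α * Complex.I)) ^ 2 + (Complex.exp (α * Complex.I))⁻¹ /
      (1 + r * (Complex.exp (α * Complex.I))⁻¹) ^ 2) := by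
    rw [H1]
    simp only [map_add, map_mul, map_div₀, map_pow, map_neg, map_one, map_zero,
      Complex.conj_I, Complex.conj_ofReal, hconj, map_ofNat]
    linear_combination (2 * r * (Complex.exp (α * Complex.I) /
      (1 + r * Complex.exp (α * Complex.I)) ^ 2 + (Complex.exp (α * Complex.I))⁻¹ /
      (1 + r * (Complex.exp (α * Complex.I))⁻¹) ^ 2)) * hI
  have K2 : (Hyy' α : ℂ) = (4 * r - 4 * r ^ 3 / (1 - r ^ 2)) * (Complex.exp (α * Complex.I) /
      (1 + r * Complex.exp (α * Complex.I)) ^ 2 + (Complex.exp (α * Complex.I))⁻¹ /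
      (1 + r * (Complex.exp (α * Complex.I))⁻¹) ^ 2) - 4 * r * (Complex.exp (α * Complex.I) /
      (1 + r * Complex.exp (α * Complex.I)) ^ 3 + (Complex.exp (α * Complex.I))⁻¹ /
      (1 + r * (Complex.exp (α * Complex.I))⁻¹) ^ 3) := by
    rw [H2]
    simp only [map_add, map_sub, map_mul, map_div₀, map_pow, map_neg, map_one,
      Complex.conj_I, Complex.conj_ofReal, hconj, map_ofNat]
    linear_combination (-(4 * r - 4 * r ^ 3 / (1 - r ^ 2)) * (Complex.exp (α * Complex.I) /
      (1 + r * Complex.exp (α * Complex.I)) ^ 2 + (Complex.exp (α * Complex.I))⁻¹ /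
      (1 + r * (Complex.exp (α * Complex.I))⁻¹) ^ 2) + 4 * r * (Complex.exp (α * Complex.I) /
      (1 + r * Complex.exp (α * Complex.I)) ^ 3 + (Complex.exp (α * Complex.I))⁻¹ /
      (1 + r * (Complex.exp (α * Complex.I))⁻¹) ^ 3)) * hI
  have hA : ((1 - 3 * r ^ 2) + (1 - r ^ 2) * (y α + y α * Hy' α - Hyy' α) : ℂ) =
      (1 + r ^ 2) * ((1 - r * Complex.exp (α * Complex.I)) *
      (1 - r * (Complex.exp (α * Complex.I))⁻¹) / ((1 + r * Complex.exp (α * Complex.I)) *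
      (1 + r * (Complex.exp (α * Complex.I))⁻¹))) := by
    rw [K1, K2, hyC]
    have := hE0 α
    have := hp α
    have := hm α
    generalize Complex.exp (α * Complex.I) = E at *
    field_simp
    ring
  have hB : ((1 + Hy' α) ^ 2 + ((deriv y α : ℝ) : ℂ) ^ 2 : ℂ) =
      ((1 - r * Complex.exp (α * Complex.I)) *
      (1 - r * (Complex.exp (α * Complex.I))⁻¹) / ((1 + r * Complex.exp (α * Complex.I)) *
      (1 + r * (Complex.exp (α * Complex.I))⁻¹))) ^ 2 := by
    rw [K1, hdyC]
    have := hE0 α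
    have := hp α
    have := hm α
    generalize Complex.exp (α * Complex.I) = E at *
    field_simp
    rw [hI]
    ring
  apply Complex.ofReal_injective
  unfold Om Bc
  push_cast
  have hO : (1 + (1 - r ^ 2) / (1 - 3 * r ^ 2) * (y α + y α * Hy' α - Hyy' α) : ℂ) =
      ((1 - 3 * r ^ 2) + (1 - r ^ 2) * (y α + y α * Hy' α - Hyy' α)) / (1 - 3 * r ^ 2) := by
    rw [add_div, div_self hr3, div_mul_eq_mul_div]
  rw [hO, hA, hB]
  ring
end
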